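/- arXiv:2312.13815 — 2 statements merged into one kernel-verified Lean document; each statement's English description precedes it below -/
import Mathlib

section
/- Let n ≥ 1, let ℓ₁,…,ℓ_n be pairwise distinct integers, let q be a nonzero complex number which is not a root of unity, and let u be a complex number with 1 − q^{2ℓ_k}u ≠ 0 for all k = 1,…,n. Then ∏_{j=1}^n (q^{−ℓ_j} − q^{ℓ_j+2}u)/(q^{−ℓ_j} − q^{ℓ_j}u) = q^{2n} + (q^{n−1} − q^{n+1}) · ∑_{k=1}^n (1/(1 − q^{2ℓ_k}u)) · (∏_{j=1}^n [ℓ_j − ℓ_k + 1]_q) / (∏_{j≠k} [ℓ_j − ℓ_k]_q). -/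
open Finset

/-- The `q`-number `[k]_q = (q^k − q^{−k})/(q − q⁻¹)` for `k ∈ ℤ`. -/
noncomputable def qint (q : ℂ) (k : ℤ) : ℂ := (q ^ k - q ^ (-k)) / (q - q⁻¹)

lemma partial_frac (n : ℕ) (v w : Fin n → ℂ) (hv : Function.Injective v) (u : ℂ)
    (hu : ∀ k, u ≠ v k) :
    ∏ j, (u - w j) / (u - v j) = 1 + ∑ k, (u - v k)⁻¹ *
      ((∏ j, (v k - w j)) / ∏ j ∈ univ.erase k, (v k - v j)) := by
  classical
  have hdeg : (Lagrange.nodal univ w - Lagrange.nodal univ v).degree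
      < (Finset.univ : Finset (Fin n)).card := by
    have := Polynomial.degree_sub_lt_left (p := Lagrange.nodal univ w) (q := Lagrange.nodal univ v)
      (by rw [Lagrange.degree_nodal, Lagrange.degree_nodal]) Lagrange.nodal_ne_zero
      (by rw [Lagrange.nodal_monic.leadingCoeff, Lagrange.nodal_monic.leadingCoeff])
    rwa [Lagrange.degree_nodal] at this
  have h := congrArg (Polynomial.eval u) (Lagrange.eq_interpolate (v := v) hv.injOn hdeg)
  rw [Lagrange.eval_interpolate_not_at_node _ (fun i _ => hu i)] at h
  have hne : ∏ j, (u - v j) ≠ 0 := Finset.prod_ne_zero_iff.2 fun j _ => sub_ne_zero.2 (hu j)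
  simp only [Polynomial.eval_sub, Lagrange.eval_nodal] at h
  rw [Finset.prod_div_distrib, div_eq_iff hne, add_mul, one_mul, ← sub_eq_iff_eq_add', h, mul_comm]
  congr 1
  refine Finset.sum_congr rfl fun k _ => ?_
  have h0 : ∏ j, (v k - v j) = 0 := Finset.prod_eq_zero (mem_univ k) (sub_self _)
  rw [h0, Lagrange.nodalWeight, Finset.prod_inv_distrib]
  ring

/-- For pairwise distinct integers `ℓ₁,…,ℓ_n`, `q` not a root of unity and
`u ∈ ℂ` with `1 − q^{2ℓ_k}u ≠ 0` for all `k`,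
`∏_j (q^{−ℓ_j} − q^{ℓ_j+2}u)/(q^{−ℓ_j} − q^{ℓ_j}u)
  = q^{2n} + (q^{n−1} − q^{n+1}) ∑_k (1 − q^{2ℓ_k}u)⁻¹ ·
      (∏_j [ℓ_j − ℓ_k + 1]_q)/(∏_{j≠k} [ℓ_j − ℓ_k]_q)`. -/
theorem stmt_13 (n : ℕ) (hn : 1 ≤ n) (q : ℂ) (hq0 : q ≠ 0)
    (hq : ∀ k : ℕ, k ≠ 0 → q ^ k ≠ 1)
    (ℓ : Fin n → ℤ) (hℓ : Function.Injective ℓ)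
    (u : ℂ) (hu : ∀ k : Fin n, 1 - q ^ (2 * ℓ k) * u ≠ 0) :
    ∏ j : Fin n, (q ^ (-ℓ j) - q ^ (ℓ j + 2) * u) / (q ^ (-ℓ j) - q ^ (ℓ j) * u) =
      q ^ (2 * (n : ℤ)) +
        (q ^ ((n : ℤ) - 1) - q ^ ((n : ℤ) + 1)) *
          ∑ k : Fin n,
            (1 / (1 - q ^ (2 * ℓ k) * u)) *
              ((∏ j : Fin n, qint q (ℓ j - ℓ k + 1)) /
                (∏ j ∈ Finset.univ.erase k, qint q (ℓ j - ℓ k))) := by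
  have hinj : ∀ a b : ℤ, q ^ (2 * a) = q ^ (2 * b) → a = b := by
    have key : ∀ a b : ℤ, a < b → q ^ (2 * a) ≠ q ^ (2 * b) := by
      intro a b hab h
      obtain ⟨m, hm⟩ := Int.eq_ofNat_of_zero_le (show 0 ≤ b - a by omega)
      apply hq (2 * m) (by omega)
      have : q ^ (2 * b) = q ^ (2 * a) * q ^ (2 * m) := by
        rw [← zpow_natCast, ← zpow_add₀ hq0]; congr 1; push_cast; omega
      rw [this] at h
      exact (mul_left_cancel₀ (zpow_ne_zero (2 * a) hq0) (by rw [mul_one]; exact h)).symm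
    intro a b h
    rcases lt_trichotomy a b with h1 | h1 | h1
    · exact absurd h (key _ _ h1)
    · exact h1
    · exact absurd h.symm (key _ _ h1)
  have hq2 : q ^ 2 ≠ 1 := hq 2 (by norm_num)
  have hqq : q - q⁻¹ ≠ 0 := by
    intro h
    apply hq2
    field_simp at h
    linear_combination h
  set x : Fin n → ℂ := fun j => q ^ (ℓ j) with hx
  have hx0 : ∀ j, x j ≠ 0 := fun j => zpow_ne_zero _ hq0
  have hx2 : ∀ j, q ^ (2 * ℓ j) = x j ^ 2 := fun j => by
    rw [mul_comm, zpow_mul]; norm_cast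
  have hxne : ∀ j k, j ≠ k → x j ^ 2 - x k ^ 2 ≠ 0 := by
    intro j k hjk h
    rw [sub_eq_zero, ← hx2, ← hx2] at h
    exact hjk (hℓ (hinj _ _ h))
  have hvinj : Function.Injective fun j => (x j ^ 2)⁻¹ := by
    intro j k h
    by_contra hjk
    exact hxne j k hjk (sub_eq_zero.2 (inv_injective h))
  have hu' : ∀ k, 1 - x k ^ 2 * u ≠ 0 := fun k => by rw [← hx2]; exact hu k
  have huv : ∀ k, u ≠ (x k ^ 2)⁻¹ := by
    intro k h
    apply hu' k
    rw [h, mul_inv_cancel₀ (pow_ne_zero 2 (hx0 k)), sub_self]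
  have hP := partial_frac n (fun j => (x j ^ 2)⁻¹) (fun j => (x j ^ 2)⁻¹ / q ^ 2) hvinj u huv
  have hL : ∏ j : Fin n, (q ^ (-ℓ j) - q ^ (ℓ j + 2) * u) / (q ^ (-ℓ j) - q ^ (ℓ j) * u)
      = (q ^ 2) ^ n * ∏ j, (u - (x j ^ 2)⁻¹ / q ^ 2) / (u - (x j ^ 2)⁻¹) := by
    have : (q ^ 2) ^ n = ∏ _j : Fin n, q ^ 2 := by simp
    rw [this, ← Finset.prod_mul_distrib]
    refine Finset.prod_congr rfl fun j _ => ?_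
    have e1 : q ^ (-ℓ j) = (x j)⁻¹ := zpow_neg _ _
    have e2 : q ^ (ℓ j + 2) = x j * q ^ 2 := by rw [zpow_add₀ hq0]; norm_cast
    have e3 : q ^ (ℓ j) = x j := rfl
    rw [e1, e2, e3]
    have h0 := hx0 j
    have d1 : (x j)⁻¹ - x j * u ≠ 0 := by
      have : (x j)⁻¹ - x j * u = (x j)⁻¹ * (1 - x j ^ 2 * u) := by field_simp
      rw [this]; exact mul_ne_zero (inv_ne_zero h0) (hu' j)
    have d2 : u - (x j ^ 2)⁻¹ ≠ 0 := sub_ne_zero.2 (huv j)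
    rw [← mul_div_assoc, div_eq_div_iff d1 d2]
    field_simp
    ring
  rw [hL, hP, mul_add, mul_one]
  have e4 : q ^ (2 * (n : ℤ)) = (q ^ 2) ^ n := by rw [zpow_mul]; norm_cast
  rw [e4, Finset.mul_sum, Finset.mul_sum]
  congr 1
  refine Finset.sum_congr rfl fun k _ => ?_
  obtain ⟨m, rfl⟩ : ∃ m, n = m + 1 := ⟨n - 1, by omega⟩
  have e5 : q ^ (((m + 1 : ℕ) : ℤ) - 1) = q ^ m := by
    rw [← zpow_natCast]; congr 1; push_cast; ring
  have e6 : q ^ (((m + 1 : ℕ) : ℤ) + 1) = q ^ m * q ^ 2 := by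
    rw [← pow_add, ← zpow_natCast]; congr 1
  rw [e5, e6, hx2, ← Finset.mul_prod_erase univ _ (mem_univ k),
    ← Finset.mul_prod_erase univ (fun j => qint q (ℓ j - ℓ k + 1)) (mem_univ k),
    mul_div_assoc, mul_div_assoc, ← Finset.prod_div_distrib, ← Finset.prod_div_distrib]
  have hk1 : qint q (ℓ k - ℓ k + 1) = 1 := by
    simp only [qint, sub_self, zero_add, zpow_one, zpow_neg]
    exact div_self hqq
  have hprod : ∏ j ∈ univ.erase k, qint q (ℓ j - ℓ k + 1) / qint q (ℓ j - ℓ k)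
      = q ^ m * ∏ j ∈ univ.erase k,
        ((x k ^ 2)⁻¹ - (x j ^ 2)⁻¹ / q ^ 2) / ((x k ^ 2)⁻¹ - (x j ^ 2)⁻¹) := by
    have : q ^ m = ∏ _j ∈ univ.erase k, q := by simp
    rw [this, ← Finset.prod_mul_distrib]
    refine Finset.prod_congr rfl fun j hj => ?_
    have hjk := hxne j k (Finset.ne_of_mem_erase hj)
    have h0 := hx0 j
    have h1 := hx0 k
    have f1 : q ^ (ℓ j - ℓ k) = x j / x k := zpow_sub₀ hq0 _ _
    have f2 : q ^ (ℓ j - ℓ k + 1) = x j / x k * q := by rw [zpow_add₀ hq0, f1, zpow_one]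
    simp only [qint, zpow_neg, f1, f2]
    rw [div_div_div_cancel_right₀ hqq]
    have d1 : x j / x k - (x j / x k)⁻¹ ≠ 0 := by
      have : x j / x k - (x j / x k)⁻¹ = (x j ^ 2 - x k ^ 2) / (x j * x k) := by field_simp
      rw [this]; exact div_ne_zero hjk (mul_ne_zero h0 h1)
    have d2 : (x k ^ 2)⁻¹ - (x j ^ 2)⁻¹ ≠ 0 := by
      have : (x k ^ 2)⁻¹ - (x j ^ 2)⁻¹ = (x j ^ 2 - x k ^ 2) / (x j ^ 2 * x k ^ 2) := by field_simp
      rw [this]; exact div_ne_zero hjk (mul_ne_zero (pow_ne_zero 2 h0) (pow_ne_zero 2 h1))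
    rw [← mul_div_assoc, div_eq_div_iff d1 d2]
    field_simp
  rw [hk1, hprod]
  generalize ∏ j ∈ univ.erase k,
        ((x k ^ 2)⁻¹ - (x j ^ 2)⁻¹ / q ^ 2) / ((x k ^ 2)⁻¹ - (x j ^ 2)⁻¹) = R
  have g : (u - (x k ^ 2)⁻¹)⁻¹ = - (x k ^ 2) / (1 - x k ^ 2 * u) := by
    have h1 := hx0 k
    have h2 := hu' k
    have h3 := sub_ne_zero.2 (huv k)
    rw [inv_eq_one_div, div_eq_div_iff h3 h2]
    field_simp
    ring
  have h1 := hx0 k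
  have h2 := hu' k
  rw [g]
  field_simp
  ring
end

section
/- Let n ≥ 1, let ℓ₁,…,ℓ_n be pairwise distinct integers, and let q be a nonzero complex number which is not a root of unity. Then ∑_{k=1}^n (∏_{j=1}^n [ℓ_j − ℓ_k + 1]_q) / (∏_{j≠k} [ℓ_j − ℓ_k]_q) = [n]_q. -/
open Finset

open Polynomial in
theorem aux_sum (n : ℕ) (t : ℂ) (x : Fin n → ℂ) (hx : Function.Injective x)
    (h0 : ∀ i, x i ≠ 0) :
    (t - 1) * ∑ k : Fin n, ∏ j ∈ Finset.univ.erase k, ((x k - t * x j) / (x k - x j))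
      = t ^ n - 1 := by
  classical
  have hP : (∏ j : Fin n, (-x j)) ≠ 0 :=
    Finset.prod_ne_zero_iff.2 (fun j _ => neg_ne_zero.2 (h0 j))
  set F : ℂ[X] := Lagrange.nodal Finset.univ (fun j => t * x j) - Lagrange.nodal Finset.univ x
    with hF
  have hdeg : F.degree < (Finset.univ : Finset (Fin n)).card := by
    have h := Polynomial.degree_sub_lt_left
      (p := Lagrange.nodal Finset.univ (fun j => t * x j)) (q := Lagrange.nodal Finset.univ x)
      (by rw [Lagrange.degree_nodal, Lagrange.degree_nodal]) Lagrange.nodal_ne_zero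
      (by rw [Lagrange.nodal_monic.leadingCoeff, Lagrange.nodal_monic.leadingCoeff])
    rwa [Lagrange.degree_nodal] at h
  have hI := Lagrange.eq_interpolate (v := x) hx.injOn hdeg
  have hE := congrArg (Polynomial.eval 0) hI
  rw [Lagrange.interpolate_apply, Polynomial.eval_finsetSum] at hE
  have hL : Polynomial.eval 0 F = (t ^ n - 1) * ∏ j : Fin n, (-x j) := by
    rw [hF, Polynomial.eval_sub, Lagrange.eval_nodal, Lagrange.eval_nodal]
    have : ∀ j, (0 : ℂ) - t * x j = t * (-x j) := fun j => by ring
    simp only [this, Finset.prod_mul_distrib, zero_sub]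
    simp
    ring
  rw [hL] at hE
  apply mul_right_cancel₀ hP
  rw [hE, Finset.mul_sum, Finset.sum_mul]
  refine Finset.sum_congr rfl fun k _ => ?_
  rw [Polynomial.eval_mul, Polynomial.eval_C, hF, Polynomial.eval_sub,
    Lagrange.eval_nodal_at_node (Finset.mem_univ k), Lagrange.eval_nodal, sub_zero,
    Lagrange.basis, Polynomial.eval_prod,
    ← Finset.mul_prod_erase Finset.univ (fun j => x k - t * x j) (Finset.mem_univ k),
    ← Finset.mul_prod_erase Finset.univ (fun j => - x j) (Finset.mem_univ k)]
  have hb : ∀ j, Polynomial.eval 0 (Lagrange.basisDivisor (x k) (x j))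
      = (x k - x j)⁻¹ * (- x j) := fun j => by simp [Lagrange.basisDivisor]
  simp only [hb, div_eq_mul_inv, Finset.prod_mul_distrib]
  ring

/-- For pairwise distinct integers `ℓ₁,…,ℓ_n` and `q` not a root of unity,
`∑_{k=1}^n (∏_{j=1}^n [ℓ_j − ℓ_k + 1]_q) / (∏_{j≠k} [ℓ_j − ℓ_k]_q) = [n]_q`. -/
theorem stmt_14 (n : ℕ) (hn : 1 ≤ n) (q : ℂ) (hq0 : q ≠ 0)
    (hq : ∀ k : ℕ, k ≠ 0 → q ^ k ≠ 1)
    (ℓ : Fin n → ℤ) (hℓ : Function.Injective ℓ) :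
    ∑ k : Fin n,
        (∏ j : Fin n, qint q (ℓ j - ℓ k + 1)) /
          (∏ j ∈ Finset.univ.erase k, qint q (ℓ j - ℓ k)) = qint q n := by
  have hq2 : q ^ 2 ≠ 1 := hq 2 (by norm_num)
  have hz : ∀ m : ℤ, m ≠ 0 → q ^ m ≠ 1 := by
    intro m hm h
    rcases Int.natAbs_eq m with h' | h'
    · rw [h', zpow_natCast] at h
      exact hq _ (Int.natAbs_ne_zero.2 hm) h
    · rw [h', zpow_neg, zpow_natCast, inv_eq_one] at h
      exact hq _ (Int.natAbs_ne_zero.2 hm) h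
  have hd : q - q⁻¹ ≠ 0 := by
    intro h
    apply hq2
    field_simp at h
    linear_combination h
  have ha : ∀ i, q ^ (ℓ i) ≠ 0 := fun i => zpow_ne_zero _ hq0
  have hinj : Function.Injective (fun i => (q ^ (ℓ i)) ^ 2) := by
    intro i j h
    by_contra hne
    have hne' : ℓ i ≠ ℓ j := fun h => hne (hℓ h)
    apply hz (2 * (ℓ i - ℓ j)) (by omega)
    have h' : (q ^ (ℓ i)) ^ 2 = (q ^ (ℓ j)) ^ 2 := h
    rw [mul_comm, zpow_mul, zpow_sub₀ hq0, show (2 : ℤ) = ((2 : ℕ) : ℤ) from rfl, zpow_natCast,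
      div_pow, h']
    exact div_self (pow_ne_zero _ (ha j))
  have key := aux_sum n (q ^ 2) (fun i => (q ^ (ℓ i)) ^ 2) hinj (fun i => pow_ne_zero _ (ha i))
  have hterm : ∀ k : Fin n, (∏ j : Fin n, qint q (ℓ j - ℓ k + 1)) /
          (∏ j ∈ Finset.univ.erase k, qint q (ℓ j - ℓ k)) =
        (q⁻¹) ^ (n - 1) * ∏ j ∈ Finset.univ.erase k,
          (((q ^ (ℓ k)) ^ 2 - q ^ 2 * (q ^ (ℓ j)) ^ 2) / ((q ^ (ℓ k)) ^ 2 - (q ^ (ℓ j)) ^ 2)) := by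
    intro k
    have h1 : qint q (ℓ k - ℓ k + 1) = 1 := by
      simp [qint, div_self hd]
    rw [← Finset.mul_prod_erase Finset.univ (fun j => qint q (ℓ j - ℓ k + 1)) (Finset.mem_univ k),
      h1, one_mul, ← Finset.prod_div_distrib]
    have hc : (Finset.univ.erase k).card = n - 1 := by simp
    rw [← hc, ← Finset.prod_const, ← Finset.prod_mul_distrib]
    refine Finset.prod_congr rfl fun j hj => ?_
    have hjk : j ≠ k := (Finset.mem_erase.1 hj).1
    have hs : (q ^ (ℓ k)) ^ 2 - (q ^ (ℓ j)) ^ 2 ≠ 0 :=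
      sub_ne_zero.2 fun h => hjk (hinj h).symm
    have hak := ha k
    have haj := ha j
    have e1 : qint q (ℓ j - ℓ k + 1) =
        -((q ^ (ℓ k)) ^ 2 - q ^ 2 * (q ^ (ℓ j)) ^ 2) / (q * q ^ (ℓ j) * q ^ (ℓ k)) / (q - q⁻¹) := by
      rw [qint, zpow_neg, zpow_add₀ hq0, zpow_sub₀ hq0, zpow_one]
      congr 1
      generalize q ^ (ℓ k) = a at *
      generalize q ^ (ℓ j) = b at *
      field_simp
      ring
    have e2 : qint q (ℓ j - ℓ k) =
        -((q ^ (ℓ k)) ^ 2 - (q ^ (ℓ j)) ^ 2) / (q ^ (ℓ j) * q ^ (ℓ k)) / (q - q⁻¹) := by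
      rw [qint, zpow_neg, zpow_sub₀ hq0]
      congr 1
      generalize q ^ (ℓ k) = a at *
      generalize q ^ (ℓ j) = b at *
      field_simp
      ring
    rw [e1, e2]
    generalize q ^ (ℓ k) = a at *
    generalize q ^ (ℓ j) = b at *
    generalize q - q⁻¹ = d at *
    generalize a ^ 2 - q ^ 2 * b ^ 2 = u at *
    generalize a ^ 2 - b ^ 2 = v at *
    field_simp
  rw [Finset.sum_congr rfl (fun k _ => hterm k), ← Finset.mul_sum]
  generalize (∑ k : Fin n, ∏ j ∈ Finset.univ.erase k,
    (((q ^ (ℓ k)) ^ 2 - q ^ 2 * (q ^ (ℓ j)) ^ 2) / ((q ^ (ℓ k)) ^ 2 - (q ^ (ℓ j)) ^ 2))) = S at *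
  obtain ⟨m, rfl⟩ : ∃ m, n = m + 1 := ⟨n - 1, by omega⟩
  rw [qint, eq_div_iff hd, zpow_neg, zpow_natCast, Nat.add_sub_cancel, inv_pow]
  have hqm : q ^ m ≠ 0 := pow_ne_zero _ hq0
  rw [← pow_mul, mul_comm 2, pow_mul, pow_succ q m] at key
  rw [pow_succ q m]
  generalize q ^ m = y at *
  field_simp
  linear_combination key
end
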